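/- Suppose that almost surely the realized p-value function p_ω satisfies (G1), (G2) and (a1)–(a3); that the process (p(·,t))_{t∈T} is PRDS on U; and that P(p(·,t) ≤ x) ≤ x for every t ∈ U and x ∈ [0,1]. Then the step-k false discovery proportions converge almost surely to the limiting false discovery proportion, Q_k → Q, and limsup_{k→∞} E[Q_k] ≤ α·μ(U) ≤ α. -/

import Mathlib

open Filter Set MeasureTheory
open scoped Classical

lemma aux_fp (α : ℝ) (hα : α ∈ Set.Ioo (0:ℝ) 1) (F : ℝ → ℝ) (hF : Monotone F)
    (h0 : ∀ r, 0 ≤ F r) (h1 : ∀ r, F r ≤ 1) (b : ℝ)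
    (hb : b = sSup {r ∈ Set.Icc (0:ℝ) 1 | r / α ≤ F r}) :
    b = α * F b ∧ b ∈ Set.Icc (0:ℝ) 1 ∧ ∀ r ∈ Set.Icc (0:ℝ) 1, r / α ≤ F r → r ≤ b := by
  obtain ⟨ha0, ha1⟩ := hα
  set A := {r ∈ Set.Icc (0:ℝ) 1 | r / α ≤ F r} with hA
  have hne : A.Nonempty := ⟨0, ⟨by simp, by simpa using h0 0⟩⟩
  have hbdd : BddAbove A := ⟨1, fun r hr => hr.1.2⟩
  have hle : ∀ r ∈ Set.Icc (0:ℝ) 1, r / α ≤ F r → r ≤ b := fun r hr h => by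
    rw [hb]; exact le_csSup hbdd ⟨hr, h⟩
  have hb0 : 0 ≤ b := hle 0 (by simp) (by simpa using h0 0)
  have hb1 : b ≤ 1 := by rw [hb]; exact csSup_le hne fun r hr => hr.1.2
  have hbF : b ≤ α * F b := by
    conv_lhs => rw [hb]
    refine csSup_le hne fun r hr => ?_
    have h2 : F r ≤ F b := hF (hle r hr.1 hr.2)
    have h3 := hr.2
    rw [div_le_iff₀ ha0] at h3
    nlinarith
  refine ⟨le_antisymm hbF ?_, ⟨hb0, hb1⟩, hle⟩
  refine hle _ ⟨by have := h0 b; positivity, by nlinarith [h1 b, h0 b]⟩ ?_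
  rw [mul_div_cancel_left₀ _ ha0.ne']
  exact hF hbF

lemma aux_conv (α : ℝ) (hα : α ∈ Set.Ioo (0:ℝ) 1) (F : ℝ → ℝ) (hF : Monotone F)
    (h0 : ∀ r, 0 ≤ F r) (h1 : ∀ r, F r ≤ 1) (hc : ContinuousOn F (Icc 0 1)) (b : ℝ)
    (hb : b = sSup {r ∈ Set.Icc (0:ℝ) 1 | r / α ≤ F r})
    (Fk : ℕ → ℝ → ℝ) (hFk : ∀ k, Monotone (Fk k))
    (h0k : ∀ k r, 0 ≤ Fk k r) (h1k : ∀ k r, Fk k r ≤ 1) (bk : ℕ → ℝ)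
    (hbk : ∀ k, bk k = sSup {r ∈ Set.Icc (0:ℝ) 1 | r / α ≤ Fk k r})
    (hu : TendstoUniformlyOn Fk F atTop (Icc 0 1))
    (h2 : 0 < b → ∀ O : Set ℝ, IsOpen O → b ∈ O →
        ∃ s₁ ∈ O ∩ Set.Icc (0:ℝ) 1, s₁ / α < F s₁) :
    Tendsto bk atTop (nhds b) := by
  obtain ⟨f1, f2, f3⟩ := aux_fp α hα F hF h0 h1 b hb
  have g := fun k => aux_fp α hα (Fk k) (hFk k) (h0k k) (h1k k) (bk k) (hbk k)
  have hlo : ∀ c < b, ∀ᶠ k in atTop, c < bk k := by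
    intro c hcb
    rcases f2.1.eq_or_lt with h | h
    · exact Eventually.of_forall fun k => (h ▸ hcb).trans_le (g k).2.1.1
    · obtain ⟨s, ⟨hs1, hs2⟩, hs3⟩ := h2 h (Ioi c) isOpen_Ioi hcb
      have := (hu.tendsto_at hs2).eventually (lt_mem_nhds hs3)
      filter_upwards [this] with k hk
      exact lt_of_lt_of_le hs1 ((g k).2.2 s hs2 hk.le)
  have hhi : ∀ c > b, ∀ᶠ k in atTop, bk k < c := by
    intro c hcb
    by_cases hc1 : 1 < c
    · exact Eventually.of_forall fun k => (g k).2.1.2.trans_lt hc1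
    have hsub : Icc c 1 ⊆ Icc (0:ℝ) 1 := Icc_subset_Icc_left (f2.1.trans hcb.le)
    have hcont : ContinuousOn (fun r => r / α - F r) (Icc c 1) :=
      (continuous_id.div_const α).continuousOn.sub (hc.mono hsub)
    obtain ⟨x, hx, hmin⟩ := isCompact_Icc.exists_isMinOn (nonempty_Icc.2 (not_lt.1 hc1)) hcont
    have hpos : 0 < x / α - F x := by
      by_contra hcon
      have := f3 x (hsub hx) (by linarith)
      linarith [hx.1]
    rw [Metric.tendstoUniformlyOn_iff] at hu
    filter_upwards [hu _ hpos] with k hk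
    by_contra hcon
    have hm : bk k ∈ Icc c 1 := ⟨not_lt.1 hcon, (g k).2.1.2⟩
    have e1 := hk _ (hsub hm)
    have e2 := hmin hm
    have e3 := (g k).1
    simp only [mem_ofPred_eq] at e2
    have e4 : bk k / α = Fk k (bk k) := by
      conv_lhs => rw [e3]
      rw [mul_div_cancel_left₀ _ hα.1.ne']
    rw [e4] at e2
    rw [Real.dist_eq, abs_sub_lt_iff] at e1
    linarith [e1.2]
  exact tendsto_order.2 ⟨hlo, hhi⟩

lemma aux_cont {E : Type*} [MeasurableSpace E] (μ : Measure E) (V : Set E) (hV : MeasurableSet V)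
    (hVf : μ V ≠ ⊤) (p : E → ℝ) (hp : Measurable p)
    (hn : ∀ t ∈ Icc (0:ℝ) 1, μ (V ∩ {s | p s = t}) = 0) :
    ContinuousOn (fun r => (μ (V ∩ {s | p s ≤ r})).toReal) (Icc 0 1) := by
  intro r hr
  have hm : ∀ r, MeasurableSet {s | p s ≤ r} := fun r => hp measurableSet_Iic
  have : IsFiniteMeasure (μ.restrict V) := ⟨by simpa using hVf.lt_top⟩
  have e : ∀ r, μ (V ∩ {s | p s ≤ r}) = (μ.restrict V) {s | p s ≤ r} := fun r => by
    rw [Measure.restrict_apply (hm r), inter_comm]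
  simp only [ContinuousWithinAt, e]
  refine (ENNReal.tendsto_toReal (measure_ne_top _ _)).comp ?_
  refine tendsto_measure_of_ae_tendsto_indicator_of_isFiniteMeasure _ (hm r) (fun i => hm i) ?_
  have hne : ∀ᵐ s ∂(μ.restrict V), p s ≠ r := by
    rw [ae_iff]
    simp only [ne_eq, not_not]
    have hm1 : MeasurableSet {s | p s = r} := hp (measurableSet_singleton r)
    rw [Measure.restrict_apply hm1, inter_comm]
    exact hn r hr
  filter_upwards [hne] with s hs
  rcases lt_or_gt_of_ne hs with h | h
  · have : ∀ᶠ x in nhdsWithin r (Icc 0 1), p s < x := nhdsWithin_le_nhds (lt_mem_nhds h)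
    filter_upwards [this] with x hx
    exact iff_of_true hx.le h.le
  · have : ∀ᶠ x in nhdsWithin r (Icc 0 1), x < p s := nhdsWithin_le_nhds (gt_mem_nhds h)
    filter_upwards [this] with x hx
    exact iff_of_false (not_le.2 hx) (not_le.2 h)

lemma aux_mono {Ω : Type*} [mΩ : MeasurableSpace Ω] (P : Measure Ω) [IsProbabilityMeasure P]
    (X : Ω → ℝ) (hX : Measurable X) (hX01 : ∀ ω, X ω ∈ Icc (0:ℝ) 1) (B : Set Ω)
    (hB : MeasurableSet B) (g : ℝ → ℝ) (hg : MonotoneOn g (Icc 0 1))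
    (hgB : (fun ω => g (X ω)) =ᵐ[P] P[B.indicator (fun _ => (1:ℝ)) |
      MeasurableSpace.comap X (inferInstance : MeasurableSpace ℝ)])
    (q q' : ℝ) (hq : q ∈ Icc (0:ℝ) 1) (hqq : q ≤ q') :
    P.real (B ∩ {ω | X ω ≤ q}) * P.real {ω | X ω ≤ q'} ≤
      P.real (B ∩ {ω | X ω ≤ q'}) * P.real {ω | X ω ≤ q} := by
  have hle : MeasurableSpace.comap X (inferInstance : MeasurableSpace ℝ) ≤ mΩ := hX.comap_le
  have hI : Integrable (B.indicator (fun _ => (1:ℝ))) P := (integrable_const 1).indicator hB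
  have hgI : Integrable (fun ω => g (X ω)) P := integrable_condExp.congr hgB.symm
  have key : ∀ s : Set ℝ, MeasurableSet s →
      ∫ ω in X ⁻¹' s, g (X ω) ∂P = P.real (B ∩ X ⁻¹' s) := by
    intro s hs
    rw [integral_congr_ae (ae_restrict_of_ae hgB), setIntegral_condExp hle hI ⟨s, hs, rfl⟩,
      integral_indicator_const _ hB]
    simp [Measure.real, Measure.restrict_apply hB]
  have k1 := key (Iic q) measurableSet_Iic
  have k2 := key (Ioc q q') measurableSet_Ioc
  have m1 : MeasurableSet (X ⁻¹' Iic q) := hX measurableSet_Iic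
  have m2 : MeasurableSet (X ⁻¹' Ioc q q') := hX measurableSet_Ioc
  have i1 : ∫ ω in X ⁻¹' Iic q, g (X ω) ∂P ≤ ∫ ω in X ⁻¹' Iic q, g q ∂P :=
    setIntegral_mono_on hgI.integrableOn (integrable_const _).integrableOn m1
      fun ω hω => hg (hX01 ω) hq hω
  have i2 : ∫ ω in X ⁻¹' Ioc q q', g q ∂P ≤ ∫ ω in X ⁻¹' Ioc q q', g (X ω) ∂P :=
    setIntegral_mono_on (integrable_const _).integrableOn hgI.integrableOn m2
      fun ω hω => hg hq (hX01 ω) hω.1.le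
  rw [k1, setIntegral_const, smul_eq_mul] at i1
  rw [k2, setIntegral_const, smul_eq_mul] at i2
  have hun : {ω | X ω ≤ q'} = X ⁻¹' Iic q ∪ X ⁻¹' Ioc q q' := by
    rw [← preimage_union, Iic_union_Ioc_eq_Iic hqq]; rfl
  have hd : Disjoint (X ⁻¹' Iic q) (X ⁻¹' Ioc q q') :=
    Disjoint.preimage _ (Iic_disjoint_Ioc le_rfl)
  have hq1 : {ω | X ω ≤ q} = X ⁻¹' Iic q := rfl
  rw [hun, hq1, inter_union_distrib_left, measureReal_union hd m2,
    measureReal_union (hd.mono inter_subset_right inter_subset_right) (hB.inter m2)]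
  have n1 : 0 ≤ P.real (X ⁻¹' Iic q) := measureReal_nonneg
  have n2 : 0 ≤ P.real (X ⁻¹' Ioc q q') := measureReal_nonneg
  have := mul_le_mul_of_nonneg_right i1 n2
  have := mul_le_mul_of_nonneg_right i2 n1
  nlinarith

lemma aux_term {Ω : Type*} [mΩ : MeasurableSpace Ω] (P : Measure Ω) [IsProbabilityMeasure P]
    (α : ℝ) (hα : α ∈ Set.Ioo (0:ℝ) 1) (m : ℕ) (hm : 0 < m)
    (X : Ω → ℝ) (hX : Measurable X) (hX01 : ∀ ω, X ω ∈ Icc (0:ℝ) 1)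
    (R : Ω → ℕ) (hR : Measurable R) (hRm : ∀ ω, R ω ≤ m)
    (hg : ∀ r : ℕ, ∃ g : ℝ → ℝ, MonotoneOn g (Icc 0 1) ∧
      (fun ω => g (X ω)) =ᵐ[P] P[{ω | R ω ≤ r}.indicator (fun _ => (1:ℝ)) |
      MeasurableSpace.comap X (inferInstance : MeasurableSpace ℝ)])
    (hs : ∀ x ∈ Set.Icc (0:ℝ) 1, P {ω | X ω ≤ x} ≤ ENNReal.ofReal x) :
    ∫ ω, (if X ω ≤ α * (R ω / m) then (1:ℝ) / R ω else 0) ∂P ≤ α / m := by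
  have hm' : (0:ℝ) < m := by exact_mod_cast hm
  have ha0 := hα.1
  set q : ℕ → ℝ := fun r => α * (r / m) with hqdef
  have hq01 : ∀ r ≤ m, q r ∈ Icc (0:ℝ) 1 := by
    intro r hr
    have h1 : (r:ℝ) / m ≤ 1 := by rw [div_le_one hm']; exact_mod_cast hr
    have h2 : (0:ℝ) ≤ (r:ℝ) / m := by positivity
    exact ⟨by positivity, by simp only [hqdef]; nlinarith [hα.2]⟩
  have hqm : Monotone q := fun i j h => by simp only [hqdef]; gcongr
  have mR : ∀ r, MeasurableSet {ω | R ω ≤ r} := fun r => hR (measurableSet_Iic)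
  have mR' : ∀ r, MeasurableSet {ω | R ω = r} := fun r => hR (measurableSet_singleton r)
  have mX : ∀ x, MeasurableSet {ω | X ω ≤ x} := fun x => hX measurableSet_Iic
  have hpt : ∀ ω, (if X ω ≤ α * (R ω / m) then (1:ℝ) / R ω else 0) =
      ∑ i ∈ Finset.range m, ({ω | R ω = i + 1} ∩ {ω | X ω ≤ q (i+1)}).indicator
        (fun _ => (1:ℝ) / ((i + 1 : ℕ):ℝ)) ω := by
    intro ω
    rcases Nat.eq_zero_or_pos (R ω) with h | h
    · rw [Finset.sum_eq_zero]
      · simp [h]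
      · intro i _
        simp [indicator, h]
    · obtain ⟨j, hj⟩ : ∃ j, R ω = j + 1 := ⟨R ω - 1, by omega⟩
      have hjm := hRm ω
      rw [Finset.sum_eq_single_of_mem j (by simp; omega)]
      · simp [indicator, hj, hqdef]
      · intro i _ hi
        have : ¬ (j = i) := fun h => hi h.symm
        simp [indicator, hj, this]
  simp_rw [hpt]
  rw [integral_finsetSum _ fun i _ =>
    (integrable_const _).indicator ((mR' (i+1)).inter (mX _))]
  set H : ℕ → ℝ := fun i => P.real ({ω | R ω ≤ i} ∩ {ω | X ω ≤ q i}) / P.real {ω | X ω ≤ q i}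
    with hH
  have hterm : ∀ i ∈ Finset.range m,
      ∫ ω, ({ω | R ω = i + 1} ∩ {ω | X ω ≤ q (i+1)}).indicator
        (fun _ => (1:ℝ) / ((i + 1 : ℕ):ℝ)) ω ∂P ≤ α / m * (H (i+1) - H i) := by
    intro i hi
    have him : i + 1 ≤ m := by simpa [Nat.succ_le_iff] using hi
    rw [integral_indicator_const _ ((mR' (i+1)).inter (mX _)), smul_eq_mul]
    set C := {ω | X ω ≤ q (i+1)} with hC
    have hsplit : P.real ({ω | R ω ≤ i + 1} ∩ C) =
        P.real ({ω | R ω ≤ i} ∩ C) + P.real ({ω | R ω = i + 1} ∩ C) := by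
      rw [← measureReal_union _ ((mR' (i+1)).inter (mX _)), ← union_inter_distrib_right]
      · congr 2
        ext ω; simp; omega
      · rw [Set.disjoint_left]
        rintro ω ⟨h1, _⟩ ⟨h2, _⟩
        simp at h1 h2; omega
    have hw : P.real C ≤ q (i+1) := by
      have := hs _ (hq01 _ him)
      exact ENNReal.toReal_le_of_le_ofReal (hq01 _ him).1 this
    have hlast : P.real {ω | X ω ≤ q i} ≤ P.real C :=
      measureReal_mono fun ω hω => le_trans hω (hqm (Nat.le_succ i))
    have n0 : 0 ≤ P.real ({ω | R ω = i + 1} ∩ C) := measureReal_nonneg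
    rcases (measureReal_nonneg : 0 ≤ P.real C).eq_or_lt with h | h
    · have h1 : P.real {ω | X ω ≤ q i} = 0 := le_antisymm (h ▸ hlast) measureReal_nonneg
      have h2 : P.real ({ω | R ω = i + 1} ∩ C) = 0 :=
        le_antisymm (h ▸ measureReal_mono inter_subset_right) n0
      simp [hH, h1, h2, ← hC, ← h]
    · obtain ⟨g, hg1, hg2⟩ := hg i
      have hmono := aux_mono P X hX hX01 _ (mR i) g hg1 hg2 (q i) (q (i+1))
        (hq01 i (by omega)) (hqm (Nat.le_succ i))
      have hHi : H i ≤ P.real ({ω | R ω ≤ i} ∩ C) / P.real C := by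
        rcases (measureReal_nonneg : 0 ≤ P.real {ω | X ω ≤ q i}).eq_or_lt with h' | h'
        · simp only [hH, ← h', div_zero]; positivity
        · simp only [hH]
          rw [div_le_div_iff₀ h' h]
          exact hmono
      have hH1 : H (i+1) = P.real ({ω | R ω ≤ i} ∩ C) / P.real C +
          P.real ({ω | R ω = i + 1} ∩ C) / P.real C := by
        rw [← add_div, ← hsplit]
      have : P.real ({ω | R ω = i + 1} ∩ C) * (1 / ((i+1:ℕ):ℝ)) ≤
          α / m * (P.real ({ω | R ω = i + 1} ∩ C) / P.real C) := by
        have h3 : 1 / ((i+1:ℕ):ℝ) ≤ α / m / P.real C := by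
          have hi0 : (0:ℝ) < ((i+1:ℕ):ℝ) := by positivity
          rw [div_le_div_iff₀ hi0 h]
          have : q (i+1) = α / m * ((i+1:ℕ):ℝ) := by simp only [hqdef]; ring
          linarith
        calc _ ≤ P.real ({ω | R ω = i + 1} ∩ C) * (α / m / P.real C) := by gcongr
          _ = _ := by ring
      refine this.trans ?_
      gcongr
      linarith
  refine (Finset.sum_le_sum hterm).trans ?_
  rw [← Finset.mul_sum, Finset.sum_range_sub]
  have hHm : H m ≤ 1 := div_le_one_of_le₀ (measureReal_mono inter_subset_right) measureReal_nonneg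
  have hH0 : 0 ≤ H 0 := by simp only [hH]; positivity
  have : 0 < α / m := by positivity
  nlinarith

lemma aux_fin {E : Type*} {Ω : Type*} [mΩ : MeasurableSpace Ω] (P : Measure Ω)
    [IsProbabilityMeasure P] (T U : Set E)
    (α : ℝ) (hα : α ∈ Set.Ioo (0:ℝ) 1) (p : Ω → E → ℝ)
    (hp_meas : ∀ t, Measurable (fun ω => p ω t))
    (hp_val : ∀ ω, ∀ t ∈ T, p ω t ∈ Set.Icc (0:ℝ) 1)
    (S : Finset E) (hS_ne : S.Nonempty) (hS_sub : ↑S ⊆ T)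
    (F : Ω → ℝ → ℝ)
    (hF : ∀ ω r, F ω r = ((S.filter (fun s => p ω s ≤ r)).card : ℝ) / S.card)
    (b : Ω → ℝ)
    (hfp : ∀ ω, b ω = α * F ω (b ω) ∧ b ω ∈ Set.Icc (0:ℝ) 1 ∧
      ∀ r ∈ Set.Icc (0:ℝ) 1, r / α ≤ F ω r → r ≤ b ω)
    (A : Ω → Finset E) (hA : ∀ ω, A ω = S.filter (fun t => p ω t ≤ b ω))
    (hPRDS : ∀ (l : ℕ) (t : Fin l → E), (∀ j, t j ∈ T) →
      ∀ j : Fin l, t j ∈ U →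
      ∀ D : Set (Fin l → ℝ), MeasurableSet D →
      (∀ x y : Fin l → ℝ, x ∈ D → x ≤ y → y ∈ D) →
      ∃ g : ℝ → ℝ, MonotoneOn g (Set.Icc 0 1) ∧
        (fun ω => g (p ω (t j))) =ᵐ[P]
          P[(fun ω => D.indicator (fun _ => (1:ℝ)) (fun i => p ω (t i))) |
            MeasurableSpace.comap (fun ω => p ω (t j)) (inferInstance : MeasurableSpace ℝ)])
    (hsuper : ∀ t ∈ U, ∀ x ∈ Set.Icc (0:ℝ) 1,
      P {ω | p ω t ≤ x} ≤ ENNReal.ofReal x) :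
    ∫ ω, (((A ω).filter (fun t => t ∈ U)).card : ℝ) / (A ω).card ∂P ≤
      α * (((S.filter (fun s => s ∈ U)).card : ℝ) / S.card) := by
  have hm : 0 < S.card := hS_ne.card_pos
  have hm' : (0:ℝ) < S.card := by exact_mod_cast hm
  have ha0 := hα.1
  set R : Ω → ℕ := fun ω => (A ω).card with hRdef
  have hbR : ∀ ω, b ω = α * (R ω / S.card) := by
    intro ω
    have h := (hfp ω).1
    rw [hF, ← hA] at h
    exact h
  have hRm : ∀ ω, R ω ≤ S.card := fun ω => by
    simp only [hRdef, hA]; exact Finset.card_filter_le _ _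
  set t : Fin S.card → E := fun i => (S.equivFin.symm i : E) with ht
  have htT : ∀ j, t j ∈ T := fun j => hS_sub (S.equivFin.symm j).2
  set cnt : ℝ → (Fin S.card → ℝ) → ℕ := fun c x => ∑ i, if x i ≤ c then 1 else 0 with hcnt
  have hcnt_eq : ∀ c ω, cnt c (fun i => p ω (t i)) = (S.filter (fun s => p ω s ≤ c)).card := by
    intro c ω
    simp only [hcnt, ht]
    rw [Finset.card_filter, ← Finset.sum_coe_sort S (fun s => if p ω s ≤ c then 1 else 0)]
    exact Equiv.sum_comp S.equivFin.symm (fun s : S => if p ω s ≤ c then 1 else 0)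
  have hcnt_meas : ∀ c, Measurable (cnt c) := by
    intro c
    refine Finset.measurable_sum _ fun i _ => ?_
    exact Measurable.ite (measurableSet_le (measurable_pi_apply i) measurable_const)
      measurable_const measurable_const
  set D : ℕ → Set (Fin S.card → ℝ) := fun r =>
    {x | ∀ j ∈ Finset.Ioc r S.card, cnt (α * (j / S.card)) x < j} with hD
  have hDm : ∀ r, MeasurableSet (D r) := by
    intro r
    have : D r = ⋂ j ∈ Finset.Ioc r S.card, cnt (α * (j / S.card)) ⁻¹' (Iio j) := by
      ext x; simp [hD]
    rw [this]
    exact Finset.measurableSet_biInter _ fun j _ => hcnt_meas _ measurableSet_Iio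
  have hDi : ∀ r, ∀ x y : Fin S.card → ℝ, x ∈ D r → x ≤ y → y ∈ D r := by
    intro r x y hx hxy j hj
    refine lt_of_le_of_lt ?_ (hx j hj)
    refine Finset.sum_le_sum fun i _ => ?_
    by_cases h : y i ≤ α * (j / S.card)
    · simp [h, (hxy i).trans h]
    · simp [h]
  have hRD : ∀ r ω, R ω ≤ r ↔ (fun i => p ω (t i)) ∈ D r := by
    intro r ω
    constructor
    · intro hr j hj
      rw [hcnt_eq]
      by_contra hcon
      rw [not_lt] at hcon
      rw [Finset.mem_Ioc] at hj
      have hj1 : (j:ℝ) / S.card ≤ 1 := by rw [div_le_one hm']; exact_mod_cast hj.2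
      have hj0 : (0:ℝ) ≤ (j:ℝ) / S.card := div_nonneg (Nat.cast_nonneg _) (Nat.cast_nonneg _)
      have h1 : α * (j / S.card) ≤ b ω := by
        refine (hfp ω).2.2 _ ⟨mul_nonneg ha0.le hj0, by nlinarith [hα.2]⟩ ?_
        rw [mul_div_cancel_left₀ _ ha0.ne', hF]
        exact div_le_div_of_nonneg_right (by exact_mod_cast hcon) hm'.le
      have h2 : j ≤ R ω := by
        refine hcon.trans ?_
        simp only [hRdef, hA]
        refine Finset.card_le_card ?_
        intro s hs
        rw [Finset.mem_filter] at hs ⊢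
        exact ⟨hs.1, hs.2.trans h1⟩
      omega
    · intro h
      by_contra hcon
      have h1 := h (R ω) (Finset.mem_Ioc.2 ⟨not_le.1 hcon, hRm ω⟩)
      rw [hcnt_eq, ← hbR, ← hA] at h1
      exact lt_irrefl _ h1
  have hRmeas : Measurable R := by
    refine measurable_of_Iic fun r => ?_
    have : R ⁻¹' Iic r = (fun ω => (fun i => p ω (t i))) ⁻¹' D r := by
      ext ω; exact hRD r ω
    rw [this]
    exact (measurable_pi_lambda _ fun i => hp_meas (t i)) (hDm r)
  have hQ : ∀ ω, (((A ω).filter (fun t => t ∈ U)).card : ℝ) / (A ω).card =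
      ∑ s ∈ S.filter (fun s => s ∈ U),
        (if p ω s ≤ α * (R ω / S.card) then (1:ℝ) / R ω else 0) := by
    intro ω
    rw [← hbR, ← Finset.sum_filter, Finset.sum_const, nsmul_eq_mul, mul_one_div]
    congr 3
    rw [hA, Finset.filter_filter, Finset.filter_filter]
    exact Finset.filter_congr fun _ _ => and_comm
  simp_rw [hQ]
  rw [integral_finsetSum]
  · calc _ ≤ ∑ s ∈ S.filter (fun s => s ∈ U), α / S.card := by
          refine Finset.sum_le_sum fun s hs => ?_
          rw [Finset.mem_filter] at hs
          refine aux_term P α hα S.card hm (fun ω => p ω s) (hp_meas s)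
            (fun ω => hp_val ω s (hS_sub hs.1)) R hRmeas hRm ?_ (hsuper s hs.2)
          intro r
          have hts : t (S.equivFin ⟨s, hs.1⟩) = s := by simp [ht]
          obtain ⟨g, h1, h2⟩ := hPRDS S.card t htT (S.equivFin ⟨s, hs.1⟩) (by rw [hts]; exact hs.2)
            (D r) (hDm r) (hDi r)
          refine ⟨g, h1, ?_⟩
          rw [hts] at h2
          have : ({ω | R ω ≤ r}.indicator (fun _ => (1:ℝ))) =
              (fun ω => (D r).indicator (fun _ => (1:ℝ)) (fun i => p ω (t i))) := by
            funext ω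
            by_cases h : R ω ≤ r
            · rw [indicator_of_mem (show ω ∈ {ω | R ω ≤ r} from h),
                indicator_of_mem ((hRD r ω).1 h)]
            · rw [indicator_of_notMem (show ω ∉ {ω | R ω ≤ r} from h),
                indicator_of_notMem (fun h' => h ((hRD r ω).2 h'))]
          rw [this]
          exact h2
      _ = _ := by rw [Finset.sum_const, nsmul_eq_mul]; ring
  · intro s _
    have hRr : Measurable (fun ω => (R ω : ℝ)) := measurable_from_top.comp hRmeas
    refine Integrable.of_bound (C := 1) (Measurable.aestronglyMeasurable ?_) ?_
    · exact Measurable.ite (measurableSet_le (hp_meas s) ((hRr.div_const _).const_mul _))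
        (hRr.const_div _) measurable_const
    · refine Eventually.of_forall fun ω => ?_
      split_ifs
      · rw [Real.norm_of_nonneg (div_nonneg zero_le_one (Nat.cast_nonneg _))]
        rcases Nat.eq_zero_or_pos (R ω) with h | h
        · simp [h]
        · rw [div_le_one (by exact_mod_cast h)]; exact_mod_cast h
      · simp

/-- if almost surely the realized p-value function `p_ω` satisfies (G1), (G2) and
(a1)–(a3), the process `(p(·,t))_{t∈T}` is PRDS on `U`, and the null p-values are superuniform,
then `Q_k → Q` almost surely and `limsup_k E[Q_k] ≤ α·μ(U) ≤ α`. -/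
theorem fBH_fdp_tendsto_ae_and_limsup_control {d : ℕ}
    (T : Set (EuclideanSpace ℝ (Fin d)))
    (hT_open : IsOpen T) (hT_bdd : Bornology.IsBounded T) (hT_ne : T.Nonempty)
    (hT_norm : volume T = 1)
    (U : Set (EuclideanSpace ℝ (Fin d))) (hU_sub : U ⊆ T) (hU_meas : MeasurableSet U)
    (α : ℝ) (hα : α ∈ Set.Ioo (0:ℝ) 1)
    {Ω : Type*} [MeasurableSpace Ω] (P : Measure Ω) [IsProbabilityMeasure P]
    -- the random p-value function
    (p : Ω → EuclideanSpace ℝ (Fin d) → ℝ)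
    (hp_meas : ∀ t, Measurable (fun ω => p ω t))
    (hp_meas' : ∀ ω, Measurable (p ω))
    (hp_val : ∀ ω, ∀ t ∈ T, p ω t ∈ Set.Icc (0:ℝ) 1)
    -- realized cumulated p-value functions and adjusted thresholds
    (a : Ω → ℝ → ℝ) (ha : ∀ ω r, a ω r = (volume {s ∈ T | p ω s ≤ r}).toReal)
    (αStar : Ω → ℝ)
    (hαStar : ∀ ω, αStar ω = sSup {r ∈ Set.Icc (0:ℝ) 1 | r / α ≤ a ω r})
    -- nested grids and empirical quantities
    (S : ℕ → Finset (EuclideanSpace ℝ (Fin d)))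
    (hS_ne : ∀ k, (S k).Nonempty) (hS_sub : ∀ k, ↑(S k) ⊆ T)
    (hS_mono : ∀ k, S k ⊆ S (k + 1))
    (ak : Ω → ℕ → ℝ → ℝ)
    (hak : ∀ ω k r, ak ω k r = (((S k).filter (fun s => p ω s ≤ r)).card : ℝ) / (S k).card)
    (b : Ω → ℕ → ℝ)
    (hb : ∀ ω k, b ω k = sSup {r ∈ Set.Icc (0:ℝ) 1 | r / α ≤ ak ω k r})
    (aU : Ω → ℝ → ℝ) (haU : ∀ ω r, aU ω r = (volume (U ∩ {s | p ω s ≤ r})).toReal)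
    (aUk : Ω → ℕ → ℝ → ℝ)
    (haUk : ∀ ω k r, aUk ω k r =
      (((S k).filter (fun s => s ∈ U ∧ p ω s ≤ r)).card : ℝ) / (S k).card)
    -- step-k rejection sets and false discovery proportions
    (A : Ω → ℕ → Finset (EuclideanSpace ℝ (Fin d)))
    (hA : ∀ ω k, A ω k = (S k).filter (fun t => p ω t ≤ b ω k))
    (Qk : ℕ → Ω → ℝ)
    (hQk : ∀ k ω, Qk k ω = if (A ω k).Nonempty
      then (((A ω k).filter (fun t => t ∈ U)).card : ℝ) / (A ω k).card else 0)
    -- limiting false discovery proportion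
    (Q : Ω → ℝ)
    (hQ : ∀ ω, Q ω = if 0 < volume {t ∈ T | p ω t ≤ αStar ω}
      then (volume (U ∩ {t | p ω t ≤ αStar ω})).toReal /
        (volume {t ∈ T | p ω t ≤ αStar ω}).toReal
      else 0)
    -- almost surely (G1), (G2) and (a1)–(a3) hold for the realized p-value function
    (hae : ∀ᵐ ω ∂P,
      TendstoUniformlyOn (ak ω) (a ω) atTop (Set.Icc 0 1) ∧
      TendstoUniformlyOn (aUk ω) (aU ω) atTop (Set.Icc 0 1) ∧
      (∀ t ∈ Set.Icc (0:ℝ) 1, volume {s ∈ T | p ω s = t} = 0) ∧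
      (αStar ω ∈ Set.Ioc 0 α → ∀ O : Set ℝ, IsOpen O → αStar ω ∈ O →
        ∃ s₁ ∈ O ∩ Set.Icc (0:ℝ) 1, ∃ s₂ ∈ O ∩ Set.Icc (0:ℝ) 1,
          s₁ / α < a ω s₁ ∧ a ω s₂ < s₂ / α) ∧
      (αStar ω = 0 → 0 < sInf (p ω '' T)))
    -- the process is PRDS on U
    (hPRDS : ∀ (l : ℕ) (t : Fin l → EuclideanSpace ℝ (Fin d)), (∀ j, t j ∈ T) →
      ∀ j : Fin l, t j ∈ U →
      ∀ D : Set (Fin l → ℝ), MeasurableSet D →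
      (∀ x y : Fin l → ℝ, x ∈ D → x ≤ y → y ∈ D) →
      ∃ g : ℝ → ℝ, MonotoneOn g (Set.Icc 0 1) ∧
        (fun ω => g (p ω (t j))) =ᵐ[P]
          P[(fun ω => D.indicator (fun _ => (1:ℝ)) (fun i => p ω (t i))) |
            MeasurableSpace.comap (fun ω => p ω (t j)) (inferInstance : MeasurableSpace ℝ)])
    -- superuniformity of the null p-values
    (hsuper : ∀ t ∈ U, ∀ x ∈ Set.Icc (0:ℝ) 1,
      P {ω | p ω t ≤ x} ≤ ENNReal.ofReal x) :
    (∀ᵐ ω ∂P, Tendsto (fun k => Qk k ω) atTop (nhds (Q ω))) ∧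
    limsup (fun k => ∫ ω, Qk k ω ∂P) atTop ≤ α * (volume U).toReal ∧
    α * (volume U).toReal ≤ α := by
  have ha0 := hα.1
  have hUle : volume U ≤ 1 := hT_norm ▸ measure_mono hU_sub
  have hUreal : (volume U).toReal ≤ 1 := ENNReal.toReal_le_of_le_ofReal zero_le_one (by simpa using hUle)
  have hcard : ∀ k, (0:ℝ) < (S k).card := fun k => by exact_mod_cast (hS_ne k).card_pos
  have hTt : volume T ≠ ⊤ := by rw [hT_norm]; simp
  have hUt : volume U ≠ ⊤ := (hUle.trans_lt (by simp)).ne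
  have hsep : ∀ ω r, {s ∈ T | p ω s ≤ r} = T ∩ {s | p ω s ≤ r} := fun ω r => by ext; simp
  -- elementary facts about `a` and `ak`
  have am : ∀ ω, Monotone (a ω) := fun ω r r' h => by
    rw [ha, ha]
    refine ENNReal.toReal_mono (measure_ne_top_of_subset (fun s hs => hs.1) hTt) ?_
    exact measure_mono fun s hs => ⟨hs.1, hs.2.trans h⟩
  have a0 : ∀ ω r, 0 ≤ a ω r := fun ω r => by rw [ha]; exact ENNReal.toReal_nonneg
  have a1 : ∀ ω r, a ω r ≤ 1 := fun ω r => by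
    rw [ha]
    refine ENNReal.toReal_le_of_le_ofReal zero_le_one ?_
    rw [ENNReal.ofReal_one, ← hT_norm]
    exact measure_mono fun s hs => hs.1
  have akm : ∀ ω k, Monotone (ak ω k) := fun ω k r r' h => by
    rw [hak, hak]
    gcongr
  have ak0 : ∀ ω k r, 0 ≤ ak ω k r := fun ω k r => by rw [hak]; positivity
  have ak1 : ∀ ω k r, ak ω k r ≤ 1 := fun ω k r => by
    rw [hak, div_le_one (hcard k)]
    exact_mod_cast Finset.card_filter_le _ _
  have fpk := fun ω k => aux_fp α hα (ak ω k) (akm ω k) (ak0 ω k) (ak1 ω k) (b ω k) (hb ω k)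
  have fp := fun ω => aux_fp α hα (a ω) (am ω) (a0 ω) (a1 ω) (αStar ω) (hαStar ω)
  have hQk0 : ∀ k ω, Qk k ω = (((A ω k).filter (fun t => t ∈ U)).card : ℝ) / (A ω k).card := by
    intro k ω
    rw [hQk]
    split_ifs with h
    · rfl
    · rw [Finset.not_nonempty_iff_eq_empty] at h
      simp [h]
  have hQk' : ∀ k ω, Qk k ω = aUk ω k (b ω k) / ak ω k (b ω k) := by
    intro k ω
    rw [hQk0, haUk, hak, div_div_div_cancel_right₀ (hcard k).ne', hA, Finset.filter_filter]
    congr 3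
    exact Finset.filter_congr fun _ _ => and_comm
  have hQ' : ∀ ω, Q ω = aU ω (αStar ω) / a ω (αStar ω) := by
    intro ω
    rw [hQ, haU, ha]
    split_ifs with h
    · rfl
    · rw [not_lt, nonpos_iff_eq_zero] at h
      simp [h]
  refine ⟨?_, ?_, by nlinarith⟩
  · filter_upwards [hae] with ω ⟨G1, G2, h1, h2, h3⟩
    have ca : ContinuousOn (a ω) (Icc 0 1) := by
      refine (aux_cont volume T hT_open.measurableSet hTt (p ω) (hp_meas' ω) ?_).congr ?_
      · intro t ht
        exact measure_mono_null (t := {s ∈ T | p ω s = t}) (fun s hs => ⟨hs.1, hs.2⟩) (h1 t ht)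
      · intro r _
        simp only [ha, hsep]
    have cU : ContinuousOn (aU ω) (Icc 0 1) := by
      refine (aux_cont volume U hU_meas hUt (p ω) (hp_meas' ω) ?_).congr ?_
      · intro t ht
        exact measure_mono_null (t := {s ∈ T | p ω s = t}) (fun s hs => ⟨hU_sub hs.1, hs.2⟩) (h1 t ht)
      · intro r _
        simp only [haU]
    have hstar : αStar ω ≤ α := by
      rw [(fp ω).1]; nlinarith [a1 ω (αStar ω)]
    have hbt : Tendsto (b ω) atTop (nhds (αStar ω)) := by
      refine aux_conv α hα (a ω) (am ω) (a0 ω) (a1 ω) ca _ (hαStar ω) (ak ω) (akm ω) (ak0 ω)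
        (ak1 ω) (b ω) (hb ω) G1 ?_
      intro hpos O hO hmem
      obtain ⟨s₁, hs₁, _, _, hs, _⟩ := h2 ⟨hpos, hstar⟩ O hO hmem
      exact ⟨s₁, hs₁, hs⟩
    rcases (fp ω).2.1.1.eq_or_lt with h | h
    · have hc := h3 h.symm
      have hlow : ∀ t ∈ T, sInf (p ω '' T) ≤ p ω t := fun t ht =>
        csInf_le ⟨0, by rintro _ ⟨s, hs, rfl⟩; exact (hp_val ω s hs).1⟩ ⟨t, ht, rfl⟩
      have hQz : Q ω = 0 := by
        have : {t ∈ T | p ω t ≤ αStar ω} = ∅ := by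
          ext t
          simp only [mem_ofPred_eq, mem_empty_iff_false, iff_false, not_and, not_le]
          intro ht
          rw [← h]; exact hc.trans_le (hlow t ht)
        rw [hQ, this]; simp
      rw [hQz]
      refine tendsto_const_nhds.congr' ?_
      rw [← h] at hbt
      filter_upwards [hbt.eventually (gt_mem_nhds hc)] with k hk
      have : A ω k = ∅ := by
        rw [hA, Finset.filter_eq_empty_iff]
        intro t ht
        exact not_le.2 (hk.trans_le (hlow t (hS_sub k ht)))
      rw [hQk0, this]; simp
    · rw [hQ']
      simp only [hQk']
      have hbw : Tendsto (b ω) atTop (nhdsWithin (αStar ω) (Icc 0 1)) :=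
        tendsto_nhdsWithin_iff.2 ⟨hbt, Eventually.of_forall fun k => (fpk ω k).2.1⟩
      have hne : a ω (αStar ω) ≠ 0 := by
        intro h0
        have := (fp ω).1
        rw [h0] at this
        linarith
      refine Tendsto.div ?_ ?_ hne
      · exact G2.tendsto_comp (cU _ (fp ω).2.1) hbw
      · exact G1.tendsto_comp (ca _ (fp ω).2.1) hbw
  · have hbound : ∀ k, ∫ ω, Qk k ω ∂P ≤
        α * ((((S k).filter (fun s => s ∈ U)).card : ℝ) / (S k).card) := by
      intro k
      simp only [hQk0]
      exact aux_fin P T U α hα p hp_meas hp_val (S k) (hS_ne k) (hS_sub k) (fun ω => ak ω k)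
        (fun ω r => hak ω k r) (fun ω => b ω k) (fun ω => fpk ω k) (fun ω => A ω k)
        (fun ω => hA ω k) hPRDS hsuper
    obtain ⟨ω, -, G2, -⟩ := hae.exists
    have hlim := G2.tendsto_at (show (1:ℝ) ∈ Icc (0:ℝ) 1 by simp)
    have e1 : aU ω 1 = (volume U).toReal := by
      rw [haU]
      congr 2
      ext s
      simp only [mem_inter_iff, mem_ofPred_eq, and_iff_left_iff_imp]
      exact fun hs => (hp_val ω s (hU_sub hs)).2
    have e2 : ∀ k, aUk ω k 1 = (((S k).filter (fun s => s ∈ U)).card : ℝ) / (S k).card := by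
      intro k
      rw [haUk]
      congr 3
      refine Finset.filter_congr fun s hs => ?_
      simp [(hp_val ω s (hS_sub k hs)).2]
    have hlim2 : Tendsto (fun k => α * ((((S k).filter (fun s => s ∈ U)).card : ℝ) / (S k).card))
        atTop (nhds (α * (volume U).toReal)) := by
      simp only [← e2, ← e1]
      exact hlim.const_mul α
    rw [← hlim2.limsup_eq]
    refine limsup_le_limsup (Eventually.of_forall hbound) ?_ hlim2.isBoundedUnder_le
    refine IsBoundedUnder.isCoboundedUnder_le ?_
    refine isBoundedUnder_of ⟨0, fun k => ?_⟩
    refine integral_nonneg fun ω => ?_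
    simp only [hQk0]
    exact div_nonneg (Nat.cast_nonneg _) (Nat.cast_nonneg _)
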